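/- In the sum-variant with k = 2 facilities and m = 3 groups, the mechanism M_3(1/3, 2/3, 1) has approximation ratio at most 9/4: on every instance with 3 groups its output has social cost at most 9/4 times the minimum social cost over all feasible solutions. -/

import Mathlib

open Finset

noncomputable section

/-- A distributed facility location setting for `k` facilities and `m` groups:
`n ≥ 2` agents on the real line, partitioned into `m ≥ k` disjoint nonempty groups. -/
structure FLSetting (k m : ℕ) where
  n : ℕ
  hn : 2 ≤ n
  hmk : k ≤ m
  grp : Fin n → Fin m
  surj : Function.Surjective grp

/-- A two-phase mechanism for `k` facilities: for each number `m` of groups, a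
representative function on finite multisets of reals, and a selection function
producing the `k` facility locations from the multiset of representatives. -/
structure TwoPhase (k : ℕ) where
  rep : ℕ → Multiset ℝ → ℝ
  sel : ℕ → Multiset ℝ → Fin k → ℝ

/-- Validity of a two-phase mechanism: the representative of a nonempty multiset
is one of its elements, and the selected facility locations form a sub-multiset
of the representatives. -/
def TwoPhase.Valid {k : ℕ} (M : TwoPhase k) : Prop :=
  (∀ (m : ℕ) (S : Multiset ℝ), S ≠ 0 → M.rep m S ∈ S) ∧
  (∀ (m : ℕ) (R : Multiset ℝ), Multiset.card R = m → k ≤ m →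
    (↑(List.ofFn (M.sel m R)) : Multiset ℝ) ≤ R)

/-- The multiset of (reported) positions of the agents in group `j`. -/
def groupMS {k m : ℕ} (S : FLSetting k m) (x : Fin S.n → ℝ) (j : Fin m) : Multiset ℝ :=
  (Finset.univ.filter (fun i => S.grp i = j)).val.map x

/-- The number of agents in group `j`. -/
def groupSize {k m : ℕ} (S : FLSetting k m) (j : Fin m) : ℕ :=
  (Finset.univ.filter (fun i => S.grp i = j)).card

/-- The multiset of the `m` group representatives. -/
def repsMS {k m : ℕ} (M : TwoPhase k) (S : FLSetting k m) (x : Fin S.n → ℝ) : Multiset ℝ :=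
  (Finset.univ.val.map fun j : Fin m => M.rep m (groupMS S x j))

/-- The facility locations output by mechanism `M` on reported positions `x`. -/
def outcome {k m : ℕ} (M : TwoPhase k) (S : FLSetting k m) (x : Fin S.n → ℝ) : Fin k → ℝ :=
  M.sel m (repsMS M S x)

/-- Sum-variant individual cost: total distance to all facilities. -/
def sumCost (k : ℕ) (xi : ℝ) (y : Fin k → ℝ) : ℝ := ∑ ℓ, |xi - y ℓ|

/-- Max-variant individual cost: distance to the farthest facility. -/
def maxCost (k : ℕ) (xi : ℝ) (y : Fin k → ℝ) : ℝ := ⨆ ℓ, |xi - y ℓ|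

/-- Social cost: average over groups of the average individual cost within the group. -/
def SC {k m : ℕ} (cost : ℝ → (Fin k → ℝ) → ℝ) (S : FLSetting k m) (x : Fin S.n → ℝ)
    (y : Fin k → ℝ) : ℝ :=
  (1 / (m : ℝ)) * ∑ j : Fin m,
    (1 / (groupSize S j : ℝ)) *
      ∑ i ∈ Finset.univ.filter (fun i => S.grp i = j), cost (x i) y

/-- A feasible solution opens the `k` facilities at the positions of `k` distinct agents. -/
def Feasible {k m : ℕ} (S : FLSetting k m) (x : Fin S.n → ℝ) (y : Fin k → ℝ) : Prop :=
  ∃ f : Fin k → Fin S.n, Function.Injective f ∧ ∀ ℓ, y ℓ = x (f ℓ)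

/-- Strategyproofness with respect to an individual cost function. -/
def Strategyproof {k : ℕ} (cost : ℝ → (Fin k → ℝ) → ℝ) (M : TwoPhase k) : Prop :=
  ∀ (m : ℕ) (S : FLSetting k m) (x : Fin S.n → ℝ) (i : Fin S.n) (x' : ℝ),
    cost (x i) (outcome M S x) ≤ cost (x i) (outcome M S (Function.update x i x'))

/-- Strategyproofness restricted to instances with exactly `m` groups. -/
def StrategyproofOn {k : ℕ} (cost : ℝ → (Fin k → ℝ) → ℝ) (M : TwoPhase k) (m : ℕ) : Prop :=
  ∀ (S : FLSetting k m) (x : Fin S.n → ℝ) (i : Fin S.n) (x' : ℝ),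
    cost (x i) (outcome M S x) ≤ cost (x i) (outcome M S (Function.update x i x'))

/-- The `t`-th leftmost element of a multiset of reals (1-indexed). -/
def kthLeftmost (S : Multiset ℝ) (t : ℕ) : ℝ := (S.sort (· ≤ ·)).getD (t - 1) 0

/-- The mechanism `M_m(θ, ℓ, r)` for two facilities: each group's representative is the
position of its `⌈θ·n_g⌉`-th leftmost agent, and the facilities are opened at the
`⌈ℓm⌉`-th and `⌈rm⌉`-th leftmost representative locations. -/
def Mmech (θ l r : ℝ) : TwoPhase 2 where
  rep := fun _ S => kthLeftmost S ⌈θ * (Multiset.card S : ℝ)⌉₊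
  sel := fun m R => ![kthLeftmost R ⌈l * (m : ℝ)⌉₊, kthLeftmost R ⌈r * (m : ℝ)⌉₊]

/-- The average over the agents of group `j` of a function of the position. -/
def groupAvg {k m : ℕ} (S : FLSetting k m) (x : Fin S.n → ℝ) (j : Fin m) (h : ℝ → ℝ) : ℝ :=
  (1 / (groupSize S j : ℝ)) * ∑ i ∈ Finset.univ.filter (fun i => S.grp i = j), h (x i)

lemma groupSize_pos {k m : ℕ} (S : FLSetting k m) (j : Fin m) : 0 < groupSize S j := by
  obtain ⟨i, hi⟩ := S.surj j
  exact Finset.card_pos.2 ⟨i, by simp [hi]⟩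

/-- If `h ≤ H` everywhere and `h ≤ L ≤ H` on at least a fraction `α` of the index set, then
the average of `h` is at most `α L + (1 - α) H`. -/
lemma avg_le_of_card_filter {ι : Type*} (s : Finset ι) (hs : 0 < s.card) (P : ι → Prop)
    [DecidablePred P] (h : ι → ℝ) {α L H : ℝ} (hα : α * s.card ≤ (s.filter P).card)
    (hLH : L ≤ H) (hH : ∀ i ∈ s, h i ≤ H) (hL : ∀ i ∈ s, P i → h i ≤ L) :
    (1 / (s.card : ℝ)) * ∑ i ∈ s, h i ≤ α * L + (1 - α) * H := by
  have hpos : (0 : ℝ) < s.card := by exact_mod_cast hs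
  have hsum : ∑ i ∈ s, h i ≤ ∑ i ∈ s, (H - if P i then H - L else 0) := by
    refine Finset.sum_le_sum fun i hi => ?_
    split_ifs with hP
    · linarith [hL i hi hP]
    · linarith [hH i hi]
  rw [Finset.sum_sub_distrib, ← Finset.sum_filter] at hsum
  simp only [Finset.sum_const, nsmul_eq_mul] at hsum
  rw [one_div, inv_mul_le_iff₀ hpos]
  nlinarith [mul_le_mul_of_nonneg_right hα (sub_nonneg.2 hLH)]

lemma le_card_filter_le_kthLeftmost (M : Multiset ℝ) {t : ℕ} (ht : 1 ≤ t)
    (htM : t ≤ Multiset.card M) :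
    t ≤ Multiset.card (M.filter (· ≤ kthLeftmost M t)) := by
  have hlen : (M.sort (· ≤ ·)).length = Multiset.card M := Multiset.length_sort ..
  have hsorted : (M.sort (· ≤ ·)).Pairwise (· ≤ ·) := Multiset.pairwise_sort ..
  have hsub : (((M.sort (· ≤ ·)).take t : List ℝ) : Multiset ℝ)
      ≤ M.filter (· ≤ kthLeftmost M t) := by
    refine Multiset.le_filter.2 ⟨?_, fun a ha => ?_⟩
    · conv_rhs => rw [← Multiset.sort_eq M (· ≤ ·)]
      exact (List.take_sublist _ _).subperm
    · obtain ⟨i, hi, rfl⟩ := List.mem_iff_getElem.1 (Multiset.mem_coe.1 ha)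
      have hi' : i < t := by rw [List.length_take] at hi; omega
      rw [kthLeftmost, List.getD_eq_getElem _ _ (by omega), List.getElem_take]
      exact hsorted.sortedLE.getElem_le_getElem_of_le (by omega)
  have := Multiset.card_le_card hsub
  rwa [Multiset.coe_card, List.length_take, hlen, min_eq_left htM] at this

lemma card_lt_add_card_filter_kthLeftmost_le (M : Multiset ℝ) {t : ℕ} (ht : 1 ≤ t)
    (htM : t ≤ Multiset.card M) :
    Multiset.card M < t + Multiset.card (M.filter (kthLeftmost M t ≤ ·)) := by
  have hlen : (M.sort (· ≤ ·)).length = Multiset.card M := Multiset.length_sort ..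
  have hsorted : (M.sort (· ≤ ·)).Pairwise (· ≤ ·) := Multiset.pairwise_sort ..
  have hsub : (((M.sort (· ≤ ·)).drop (t - 1) : List ℝ) : Multiset ℝ)
      ≤ M.filter (kthLeftmost M t ≤ ·) := by
    refine Multiset.le_filter.2 ⟨?_, fun a ha => ?_⟩
    · conv_rhs => rw [← Multiset.sort_eq M (· ≤ ·)]
      exact (List.drop_sublist _ _).subperm
    · obtain ⟨i, hi, rfl⟩ := List.mem_iff_getElem.1 (Multiset.mem_coe.1 ha)
      rw [kthLeftmost, List.getD_eq_getElem _ _ (by omega), List.getElem_drop]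
      exact hsorted.sortedLE.getElem_le_getElem_of_le (by omega)
  have := Multiset.card_le_card hsub
  rw [Multiset.coe_card, List.length_drop, hlen] at this
  omega

lemma sort_map_univ_eq_ofFn {m : ℕ} (ρ : Fin m → ℝ) :
    (Finset.univ.val.map ρ).sort (· ≤ ·) = List.ofFn (ρ ∘ Tuple.sort ρ) := by
  refine List.Perm.eq_of_pairwise' (r := (· ≤ ·)) (Multiset.pairwise_sort ..)
    (Tuple.monotone_sort ρ).sortedLE_ofFn.pairwise ?_
  rw [← Multiset.coe_eq_coe, Multiset.sort_eq, Fin.univ_val_map, Multiset.coe_eq_coe]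
  exact ((Tuple.sort ρ).ofFn_comp_perm ρ).symm

section OneThird

variable {k m : ℕ} (S : FLSetting k m) (x : Fin S.n → ℝ) (j : Fin m)

/-- The position of the `⌈n_g / 3⌉`-th leftmost agent of group `j`. -/
def thirdRep : ℝ :=
  kthLeftmost (groupMS S x j) ⌈(1 / 3 : ℝ) * (Multiset.card (groupMS S x j) : ℝ)⌉₊

lemma card_groupMS : Multiset.card (groupMS S x j) = groupSize S j := by
  rw [groupMS, Multiset.card_map]
  rfl

lemma card_filter_groupMS (P : ℝ → Prop) [DecidablePred P] :
    Multiset.card ((groupMS S x j).filter P) =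
      ((Finset.univ.filter (fun i => S.grp i = j)).filter (fun i => P (x i))).card := by
  rw [groupMS, Multiset.filter_map, Multiset.card_map]
  rfl

lemma one_le_ceil_third : 1 ≤ ⌈(1 / 3 : ℝ) * (Multiset.card (groupMS S x j) : ℝ)⌉₊ := by
  have : (0 : ℝ) < groupSize S j := by exact_mod_cast groupSize_pos S j
  rw [card_groupMS, Nat.one_le_ceil_iff]
  positivity

lemma ceil_third_le :
    ⌈(1 / 3 : ℝ) * (Multiset.card (groupMS S x j) : ℝ)⌉₊ ≤ Multiset.card (groupMS S x j) := by
  rw [Nat.ceil_le]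
  linarith [(Nat.cast_nonneg (Multiset.card (groupMS S x j)) : (0 : ℝ) ≤ _)]

/-- At least a third of the agents lie weakly to the left of the representative. -/
lemma groupAvg_le_of_left {h : ℝ → ℝ} {L H : ℝ} (hLH : L ≤ H) (hH : ∀ z, h z ≤ H)
    (hL : ∀ z ≤ thirdRep S x j, h z ≤ L) :
    groupAvg S x j h ≤ 1 / 3 * L + 2 / 3 * H := by
  have hcard := le_card_filter_le_kthLeftmost (groupMS S x j)
    (one_le_ceil_third S x j) (ceil_third_le S x j)
  rw [card_filter_groupMS, Nat.ceil_le, card_groupMS] at hcard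
  have := avg_le_of_card_filter _ (groupSize_pos S j) (fun i => x i ≤ thirdRep S x j)
    (fun i => h (x i)) (by rw [thirdRep, card_groupMS]; exact hcard) hLH (fun i _ => hH (x i))
    (fun i _ hi => hL _ hi)
  unfold groupAvg groupSize
  linarith

/-- At least two thirds of the agents lie weakly to the right of the representative. -/
lemma groupAvg_le_of_right {h : ℝ → ℝ} {L H : ℝ} (hLH : L ≤ H) (hH : ∀ z, h z ≤ H)
    (hL : ∀ z, thirdRep S x j ≤ z → h z ≤ L) :
    groupAvg S x j h ≤ 2 / 3 * L + 1 / 3 * H := by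
  have hcard := card_lt_add_card_filter_kthLeftmost_le (groupMS S x j)
    (one_le_ceil_third S x j) (ceil_third_le S x j)
  have hceil := Nat.ceil_lt_add_one
    (a := (1 / 3 : ℝ) * (Multiset.card (groupMS S x j) : ℝ)) (by positivity)
  have hcard' := Nat.succ_le_of_lt hcard
  rw [← Nat.cast_le (α := ℝ), card_filter_groupMS] at hcard'
  push_cast at hcard'
  have hfrac : (2 / 3 : ℝ) * (groupSize S j : ℝ) ≤
      (((Finset.univ.filter (fun i => S.grp i = j)).filter
        (fun i => thirdRep S x j ≤ x i)).card : ℝ) := by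
    rw [← card_groupMS S x j]
    unfold thirdRep
    linarith
  have := avg_le_of_card_filter _ (groupSize_pos S j) (fun i => thirdRep S x j ≤ x i)
    (fun i => h (x i)) hfrac hLH (fun i _ => hH (x i)) (fun i _ hi => hL _ hi)
  unfold groupAvg groupSize
  linarith

lemma groupAvg_le {h : ℝ → ℝ} {H : ℝ} (hH : ∀ z, h z ≤ H) : groupAvg S x j h ≤ H := by
  linarith [groupAvg_le_of_left S x j le_rfl hH (fun z _ => hH z)]

end OneThird

/-- The excess of the cost of an agent at `z` for facilities at `b` and `c` over `9/4` times
its cost for two facilities at `p`. -/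
def excess (b c p z : ℝ) : ℝ := |z - b| + |z - c| - 9 / 2 * |z - p|

lemma excess_monotone_left {b c p z w : ℝ} (hzw : z ≤ w) (hwp : w ≤ p) :
    excess b c p z ≤ excess b c p w := by
  unfold excess
  rw [abs_of_nonpos (by linarith : z - p ≤ 0), abs_of_nonpos (by linarith : w - p ≤ 0)]
  have hb := abs_sub_le z w b
  have hc := abs_sub_le z w c
  rw [abs_of_nonpos (by linarith : z - w ≤ 0)] at hb hc
  linarith

lemma excess_antitone_right {b c p z w : ℝ} (hwz : w ≤ z) (hpw : p ≤ w) :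
    excess b c p z ≤ excess b c p w := by
  unfold excess
  rw [abs_of_nonneg (by linarith : 0 ≤ z - p), abs_of_nonneg (by linarith : 0 ≤ w - p)]
  have hb := abs_sub_le z w b
  have hc := abs_sub_le z w c
  rw [abs_of_nonneg (by linarith : 0 ≤ z - w)] at hb hc
  linarith

lemma excess_le_self (b c p z : ℝ) : excess b c p z ≤ excess b c p p := by
  rcases le_total z p with h | h
  · exact excess_monotone_left h le_rfl
  · exact excess_antitone_right h le_rfl

lemma sum_groupAvg_excess_nonpos {k m : ℕ} (S : FLSetting k m) (x : Fin S.n → ℝ)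
    (u v w : Fin m) (huv : thirdRep S x u ≤ thirdRep S x v)
    (hvw : thirdRep S x v ≤ thirdRep S x w) (p : ℝ) :
    groupAvg S x u (excess (thirdRep S x v) (thirdRep S x w) p) +
      groupAvg S x v (excess (thirdRep S x v) (thirdRep S x w) p) +
      groupAvg S x w (excess (thirdRep S x v) (thirdRep S x w) p) ≤ 0 := by
  set b := thirdRep S x v with hb
  set c := thirdRep S x w with hc
  have hmax := excess_le_self b c p
  have hatb : excess b c p b = (c - b) - 9 / 2 * |b - p| := by
    simp [excess, abs_sub_comm b c, abs_of_nonneg (sub_nonneg.2 hvw)]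
  have hatc : excess b c p c = (c - b) - 9 / 2 * |c - p| := by
    simp [excess, abs_of_nonneg (sub_nonneg.2 hvw)]
  have hatp : excess b c p p = |p - b| + |p - c| := by simp [excess]
  rcases le_total p b with hpb | hbp
  · have hu := groupAvg_le S x u hmax
    have hv := groupAvg_le_of_right S x v (hmax b) hmax
      fun z hz => excess_antitone_right (hb ▸ hz) hpb
    have hw := groupAvg_le_of_right S x w (hmax c) hmax
      fun z hz => excess_antitone_right (hc ▸ hz) (hpb.trans hvw)
    rw [abs_of_nonneg (by linarith)] at hatb hatc
    rw [abs_of_nonpos (by linarith), abs_of_nonpos (by linarith)] at hatp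
    linarith
  · have hu := groupAvg_le_of_left S x u (hmax b) hmax
      fun z hz => excess_monotone_left (hz.trans huv) hbp
    have hv := groupAvg_le_of_left S x v (hmax b) hmax
      fun z hz => excess_monotone_left (hb ▸ hz) hbp
    rw [abs_of_nonpos (by linarith)] at hatb
    rcases le_total p c with hpc | hcp
    · have hw := groupAvg_le_of_right S x w (hmax c) hmax
        fun z hz => excess_antitone_right (hc ▸ hz) hpc
      rw [abs_of_nonneg (by linarith)] at hatc
      rw [abs_of_nonneg (by linarith), abs_of_nonpos (by linarith)] at hatp
      linarith
    · have hw := groupAvg_le_of_left S x w (hmax c) hmax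
        fun z hz => excess_monotone_left (hc ▸ hz) hcp
      rw [abs_of_nonpos (by linarith)] at hatc
      rw [abs_of_nonneg (by linarith), abs_of_nonneg (by linarith)] at hatp
      linarith

lemma groupAvg_excess {k m : ℕ} (S : FLSetting k m) (x : Fin S.n → ℝ) (j : Fin m)
    (b c p : ℝ) :
    groupAvg S x j (excess b c p) = groupAvg S x j (fun z => |z - b|) +
      groupAvg S x j (fun z => |z - c|) - 9 / 2 * groupAvg S x j (fun z => |z - p|) := by
  simp only [groupAvg, excess, Finset.sum_sub_distrib, Finset.sum_add_distrib,
    ← Finset.mul_sum]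
  ring

lemma SC_sumCost_two {m : ℕ} (S : FLSetting 2 m) (x : Fin S.n → ℝ) (y : Fin 2 → ℝ)
    (σ : Equiv.Perm (Fin m)) :
    SC (sumCost 2) S x y = (1 / (m : ℝ)) * ∑ j : Fin m,
      (groupAvg S x (σ j) (fun z => |z - y 0|) + groupAvg S x (σ j) (fun z => |z - y 1|)) := by
  rw [Equiv.sum_comp σ fun j =>
    groupAvg S x j (fun z => |z - y 0|) + groupAvg S x j (fun z => |z - y 1|)]
  simp only [SC, sumCost, Fin.sum_univ_two, groupAvg, Finset.sum_add_distrib, mul_add]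

lemma outcome_Mmech_three (S : FLSetting 2 3) (x : Fin S.n → ℝ) :
    outcome (Mmech (1 / 3) (2 / 3) 1) S x =
      ![thirdRep S x (Tuple.sort (thirdRep S x) 1),
        thirdRep S x (Tuple.sort (thirdRep S x) 2)] := by
  have htwo : ⌈(2 / 3 : ℝ) * ((3 : ℕ) : ℝ)⌉₊ = 2 := by
    rw [show (2 / 3 : ℝ) * ((3 : ℕ) : ℝ) = ((2 : ℕ) : ℝ) by norm_num, Nat.ceil_natCast]
  have hthree : ⌈(1 : ℝ) * ((3 : ℕ) : ℝ)⌉₊ = 3 := by rw [one_mul, Nat.ceil_natCast]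
  have hreps : repsMS (Mmech (1 / 3) (2 / 3) 1) S x = Finset.univ.val.map (thirdRep S x) := rfl
  rw [outcome, hreps]
  simp only [Mmech]
  rw [htwo, hthree, kthLeftmost, kthLeftmost, sort_map_univ_eq_ofFn]
  simp [List.ofFn_succ]

/-- In the sum-variant with two facilities and `m = 3` groups, the mechanism
`M_3(1/3, 2/3, 1)` has approximation ratio at most `9/4`. -/
theorem stmt5 (S : FLSetting 2 3) (x : Fin S.n → ℝ) (y : Fin 2 → ℝ) (hy : Feasible S x y) :
    SC (sumCost 2) S x (outcome (Mmech (1 / 3) (2 / 3) 1) S x)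
      ≤ (9 / 4) * SC (sumCost 2) S x y := by
  have hmono := Tuple.monotone_sort (thirdRep S x)
  rw [outcome_Mmech_three]
  set σ := Tuple.sort (thirdRep S x)
  have hbound := sum_groupAvg_excess_nonpos S x (σ 0) (σ 1) (σ 2)
    (hmono (by decide : (0 : Fin 3) ≤ 1)) (hmono (by decide : (1 : Fin 3) ≤ 2))
  have h0 := hbound (y 0)
  have h1 := hbound (y 1)
  simp only [groupAvg_excess] at h0 h1
  rw [SC_sumCost_two S x _ σ, SC_sumCost_two S x _ σ]
  simp only [Fin.sum_univ_three, Matrix.cons_val_zero, Matrix.cons_val_one]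
  push_cast
  linarith

end
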